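/- (Proposition 2.1, existence and pathwise uniqueness.) Let U be a uniform random variable on I, θ₀ a 𝕋-valued random variable with law μ̄₀ ∈ 𝒫(𝕋), and B a standard Brownian motion, with U, θ₀ and B mutually independent. Then there exists a solution θ of the nonlinear equation for the labeled graphon W with data (U, θ₀, B); moreover the solution is pathwise unique: any two solutions with the same U, θ₀ and B are P-almost surely equal as elements of C([0,T],𝕋). -/

import Mathlib

open MeasureTheory ProbabilityTheory Real Set Filter Topology

noncomputable section

/-- The one-dimensional torus `𝕋 = ℝ/(2πℤ)`. -/
abbrev Torus : Type := AddCircle (2 * Real.pi)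

instance : Fact (0 < 2 * Real.pi) := ⟨by positivity⟩

/-- The label space `I = [0,1]`. -/
abbrev I01 : Set ℝ := Set.Icc (0:ℝ) 1

/-- `F` is bounded and Lipschitz. -/
def BddLip (F : Torus → ℝ) : Prop :=
  (∃ K : NNReal, LipschitzWith K F) ∧ ∃ M : ℝ, ∀ a, |F a| ≤ M

/-- `Γ` is bounded and Lipschitz (jointly on `𝕋 × 𝕋`). -/
def BddLip2 (Γ : Torus → Torus → ℝ) : Prop :=
  (∃ K : NNReal, LipschitzWith K (fun p : Torus × Torus => Γ p.1 p.2)) ∧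
    ∃ M : ℝ, ∀ a b, |Γ a b| ≤ M

/-- A labeled graphon: a symmetric measurable function `I² → [0,1]`. -/
def IsGraphon (W : ℝ → ℝ → ℝ) : Prop :=
  Measurable (fun p : ℝ × ℝ => W p.1 p.2) ∧ (∀ x y, W x y ∈ Set.Icc (0:ℝ) 1) ∧
    ∀ x y, W x y = W y x

/-- A standard Brownian motion on `[0,T]`: a continuous real-valued process starting at `0`
whose increment `B_t − B_s` is Gaussian of mean `0` and variance `t − s` and is independent
of the past `(B_r)_{r ≤ s}`. -/
def IsStandardBM {Ω : Type*} [MeasurableSpace Ω] (T : ℝ) (P : Measure Ω)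
    (B : Ω → ℝ → ℝ) : Prop :=
  (∀ ω, B ω 0 = 0) ∧ (∀ ω, ContinuousOn (B ω) (Set.Icc 0 T)) ∧
  (∀ s : ℝ, Measurable (fun ω => B ω s)) ∧
  (∀ s t : ℝ, 0 ≤ s → s ≤ t → t ≤ T →
    P.map (fun ω => B ω t - B ω s) = ProbabilityTheory.gaussianReal 0 (Real.toNNReal (t - s)) ∧
    ProbabilityTheory.IndepFun (fun ω => B ω t - B ω s)
      (fun ω => (fun r : Set.Icc (0:ℝ) s => B ω r)) P)

/-- The integrated drift
`∫₀ᵗ F(p_s) ds + ∫₀ᵗ ∫_I W(x,y) ( ∫_𝕋 Γ(p_s, u) μ^y_s(du) ) dy ds`. -/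
def drift (F : Torus → ℝ) (Γ : Torus → Torus → ℝ) (W : ℝ → ℝ → ℝ)
    (μ : ℝ → ℝ → Measure Torus) (x : ℝ) (p : ℝ → Torus) (t : ℝ) : ℝ :=
  (∫ s in Set.Icc 0 t, F (p s)) +
  ∫ s in Set.Icc 0 t, ∫ y in I01, W x y * ∫ u, Γ (p s) u ∂(μ y s)

/-- The data `(U, θ0, B)` of the nonlinear equation: `U` uniform on `I`, `θ0` with law
`μ0`, `B` a standard Brownian motion, the three mutually independent. -/
def MeanFieldData {Ω : Type*} [MeasurableSpace Ω] (T : ℝ) (P : Measure Ω)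
    (μ0 : Measure Torus) (U : Ω → ℝ) (θ0 : Ω → Torus) (B : Ω → ℝ → ℝ) : Prop :=
  Measurable U ∧ P.map U = volume.restrict I01 ∧
  Measurable θ0 ∧ P.map θ0 = μ0 ∧
  IsStandardBM T P B ∧
  ProbabilityTheory.IndepFun U θ0 P ∧
  ProbabilityTheory.IndepFun (fun ω => (U ω, θ0 ω)) (fun ω => B ω) P

/-- A continuous `𝕋`-valued process `θ` is a solution of the nonlinear equation for the
labeled graphon `W` with data `(U, θ0, B)` if, `P`-a.s., for all `t ∈ [0,T]`,
`θ_t = θ0 + π( ∫₀ᵗ F(θ_s) ds + ∫₀ᵗ ∫_I W(U,y) (∫_𝕋 Γ(θ_s,u) μ^y_s(du)) dy ds + B_t )`,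
where `μ^y_s` (here the kernel `μker y s`) is a regular conditional distribution of `θ_s`
given `U = y`. -/
structure IsMeanFieldSolution {Ω : Type*} [MeasurableSpace Ω] (T : ℝ) (P : Measure Ω)
    (F : Torus → ℝ) (Γ : Torus → Torus → ℝ) (W : ℝ → ℝ → ℝ)
    (U : Ω → ℝ) (θ0 : Ω → Torus) (B : Ω → ℝ → ℝ)
    (θ : Ω → ℝ → Torus) (μker : ℝ → ℝ → Measure Torus) : Prop where
  meas : ∀ s : ℝ, Measurable (fun ω => θ ω s)
  cont : ∀ ω, ContinuousOn (θ ω) (Set.Icc 0 T)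
  kerMeas : ∀ s : ℝ, Measurable (fun y => μker y s)
  kerProb : ∀ y s, IsProbabilityMeasure (μker y s)
  disint : ∀ s ∈ Set.Icc (0:ℝ) T, ∀ S : Set ℝ, MeasurableSet S →
    ∀ A : Set Torus, MeasurableSet A →
      P {ω | U ω ∈ S ∧ θ ω s ∈ A} = ∫⁻ y in S ∩ I01, μker y s A ∂volume
  sde : ∀ᵐ ω ∂P, ∀ t ∈ Set.Icc (0:ℝ) T,
    θ ω t = θ0 ω + ((drift F Γ W μker (U ω) (θ ω) t + B ω t : ℝ) : Torus)

section helpers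

variable {Ω : Type*} [MeasurableSpace Ω]

/-- Jointly regular process. -/
structure GoodProc (θ : Ω → ℝ → Torus) : Prop where
  meas : ∀ s : ℝ, Measurable (fun ω => θ ω s)
  cont : ∀ ω, Continuous (θ ω)

theorem GoodProc.joint {θ : Ω → ℝ → Torus} (h : GoodProc θ) :
    Measurable (fun p : Ω × ℝ => θ p.1 p.2) := by
  have := measurable_uncurry_of_continuous_of_measurable (u := fun (s : ℝ) (ω : Ω) => θ ω s)
    h.cont h.meas
  exact this.comp measurable_swap

/-- drift integrand -/
def gInt (P : Measure Ω) (F : Torus → ℝ) (Γ : Torus → Torus → ℝ) (W : ℝ → ℝ → ℝ)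
    (U : Ω → ℝ) (θ : Ω → ℝ → Torus) (ω : Ω) (s : ℝ) : ℝ :=
  F (θ ω s) + ∫ ω', W (U ω) (U ω') * Γ (θ ω s) (θ ω' s) ∂P

/-- Kernel-free drift. -/
def dr (P : Measure Ω) (F : Torus → ℝ) (Γ : Torus → Torus → ℝ) (W : ℝ → ℝ → ℝ)
    (U : Ω → ℝ) (θ : Ω → ℝ → Torus) (ω : Ω) (t : ℝ) : ℝ :=
  ∫ s in (0:ℝ)..t, gInt P F Γ W U θ ω s

theorem BddLip2.meas {Γ : Torus → Torus → ℝ} (hΓ : BddLip2 Γ) :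
    Measurable (fun p : Torus × Torus => Γ p.1 p.2) := by
  obtain ⟨⟨K, hK⟩, _⟩ := hΓ
  exact hK.continuous.measurable

theorem gInt_meas (P : Measure Ω) [IsProbabilityMeasure P] {F : Torus → ℝ}
    {Γ : Torus → Torus → ℝ} {W : ℝ → ℝ → ℝ} {U : Ω → ℝ} {θ : Ω → ℝ → Torus}
    (hF : BddLip F) (hΓ : BddLip2 Γ) (hW : IsGraphon W) (hU : Measurable U) (hθ : GoodProc θ) :
    Measurable (fun p : Ω × ℝ => gInt P F Γ W U θ p.1 p.2) := by
  have hFm : Measurable F := by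
    obtain ⟨⟨K, hK⟩, _⟩ := hF
    exact hK.continuous.measurable
  unfold gInt
  refine (hFm.comp hθ.joint).add ?_
  have h : Measurable (Function.uncurry (fun (p : Ω × ℝ) (ω' : Ω) =>
      W (U p.1) (U ω') * Γ (θ p.1 p.2) (θ ω' p.2))) := by
    refine Measurable.mul ?_ ?_
    · exact hW.1.comp ((hU.comp (measurable_fst.comp measurable_fst)).prodMk
        (hU.comp measurable_snd))
    · exact hΓ.meas.comp ((hθ.joint.comp measurable_fst).prodMk
        (hθ.joint.comp (measurable_snd.prodMk (measurable_snd.comp measurable_fst))))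
  exact (StronglyMeasurable.integral_prod_right (ν := P) h.stronglyMeasurable).measurable

theorem WΓ_bound {Γ : Torus → Torus → ℝ} {W : ℝ → ℝ → ℝ} (hW : IsGraphon W) {M : ℝ}
    (hM : ∀ a b, |Γ a b| ≤ M) (x y a b) : ‖W x y * Γ a b‖ ≤ M := by
  have h := hW.2.1 x y
  rw [norm_mul, Real.norm_eq_abs, Real.norm_eq_abs, abs_of_nonneg h.1]
  calc W x y * |Γ a b| ≤ 1 * |Γ a b| := by
        exact mul_le_mul_of_nonneg_right h.2 (abs_nonneg _)
    _ ≤ M := by simpa using hM a b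

theorem inner_integrable (P : Measure Ω) [IsProbabilityMeasure P]
    {Γ : Torus → Torus → ℝ} {W : ℝ → ℝ → ℝ} {U : Ω → ℝ} {θ : Ω → ℝ → Torus}
    (hΓ : BddLip2 Γ) (hW : IsGraphon W) (hU : Measurable U) (hθ : GoodProc θ) (x : ℝ) (a : Torus)
    (s : ℝ) : Integrable (fun ω' => W x (U ω') * Γ a (θ ω' s)) P := by
  obtain ⟨M, hM⟩ := hΓ.2
  refine Integrable.of_bound (C := M) ?_ (Eventually.of_forall fun ω' => WΓ_bound hW hM _ _ _ _)
  refine Measurable.aestronglyMeasurable (Measurable.mul ?_ ?_)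
  · exact hW.1.comp (measurable_const.prodMk hU)
  · exact hΓ.meas.comp (measurable_const.prodMk (hθ.meas s))

theorem gInt_bound (P : Measure Ω) [IsProbabilityMeasure P] {F : Torus → ℝ}
    {Γ : Torus → Torus → ℝ} {W : ℝ → ℝ → ℝ} {U : Ω → ℝ} {θ : Ω → ℝ → Torus}
    (hF : BddLip F) (hΓ : BddLip2 Γ) (hW : IsGraphon W) :
    ∃ C, ∀ ω s, ‖gInt P F Γ W U θ ω s‖ ≤ C := by
  obtain ⟨M, hM⟩ := hΓ.2
  obtain ⟨M', hM'⟩ := hF.2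
  refine ⟨M' + M, fun ω s => ?_⟩
  refine (norm_add_le _ _).trans (add_le_add (hM' _) ?_)
  have := norm_integral_le_of_norm_le_const (μ := P) (C := M)
    (f := fun ω' => W (U ω) (U ω') * Γ (θ ω s) (θ ω' s))
    (Eventually.of_forall fun ω' => WΓ_bound hW hM _ _ _ _)
  simpa using this

theorem gInt_ii (P : Measure Ω) [IsProbabilityMeasure P] {F : Torus → ℝ}
    {Γ : Torus → Torus → ℝ} {W : ℝ → ℝ → ℝ} {U : Ω → ℝ} {θ : Ω → ℝ → Torus}
    (hF : BddLip F) (hΓ : BddLip2 Γ) (hW : IsGraphon W) (hU : Measurable U) (hθ : GoodProc θ)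
    (ω : Ω) (a b : ℝ) : IntervalIntegrable (gInt P F Γ W U θ ω) volume a b := by
  obtain ⟨C, hC⟩ := gInt_bound P (U := U) (θ := θ) hF hΓ hW
  have hm : Measurable (gInt P F Γ W U θ ω) :=
    (gInt_meas P hF hΓ hW hU hθ).comp measurable_prodMk_left
  refine (intervalIntegrable_const (c := C)).mono_fun hm.aestronglyMeasurable ?_
  refine Eventually.of_forall fun s => (hC ω s).trans (le_abs_self C)

theorem dr_cont (P : Measure Ω) [IsProbabilityMeasure P] {F : Torus → ℝ}
    {Γ : Torus → Torus → ℝ} {W : ℝ → ℝ → ℝ} {U : Ω → ℝ} {θ : Ω → ℝ → Torus}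
    (hF : BddLip F) (hΓ : BddLip2 Γ) (hW : IsGraphon W) (hU : Measurable U) (hθ : GoodProc θ)
    (ω : Ω) : Continuous (dr P F Γ W U θ ω) :=
  intervalIntegral.continuous_primitive (gInt_ii P hF hΓ hW hU hθ ω) 0

theorem dr_meas (P : Measure Ω) [IsProbabilityMeasure P] {F : Torus → ℝ}
    {Γ : Torus → Torus → ℝ} {W : ℝ → ℝ → ℝ} {U : Ω → ℝ} {θ : Ω → ℝ → Torus}
    (hF : BddLip F) (hΓ : BddLip2 Γ) (hW : IsGraphon W) (hU : Measurable U) (hθ : GoodProc θ)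
    (t : ℝ) : Measurable (fun ω => dr P F Γ W U θ ω t) := by
  have h := (gInt_meas P hF hΓ hW hU hθ).stronglyMeasurable
  unfold dr
  simp only [intervalIntegral]
  refine Measurable.sub ?_ ?_
  · exact (StronglyMeasurable.integral_prod_right (f := fun ω s => gInt P F Γ W U θ ω s)
      (ν := volume.restrict (Ioc 0 t)) h).measurable
  · exact (StronglyMeasurable.integral_prod_right (f := fun ω s => gInt P F Γ W U θ ω s)
      (ν := volume.restrict (Ioc t 0)) h).measurable

theorem step_est (P : Measure Ω) [IsProbabilityMeasure P] {F : Torus → ℝ}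
    {Γ : Torus → Torus → ℝ} {W : ℝ → ℝ → ℝ} {U : Ω → ℝ}
    (hF : BddLip F) (hΓ : BddLip2 Γ) (hW : IsGraphon W) (hU : Measurable U) :
    ∃ L : ℝ, 0 ≤ L ∧ ∀ (θ θ' : Ω → ℝ → Torus), GoodProc θ → GoodProc θ' →
      ∀ (M : ℝ → ℝ), Continuous M → ∀ T : ℝ,
      (∀ᵐ ω ∂P, ∀ s ∈ Icc 0 T, dist (θ ω s) (θ' ω s) ≤ M s) → ∀ ω,
      (∀ s ∈ Icc 0 T, dist (θ ω s) (θ' ω s) ≤ M s) → ∀ t ∈ Icc 0 T,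
      |dr P F Γ W U θ ω t - dr P F Γ W U θ' ω t| ≤ ∫ s in (0:ℝ)..t, L * M s := by
  obtain ⟨⟨K, hK⟩, -⟩ := id hF
  obtain ⟨⟨K', hK'⟩, -⟩ := id hΓ
  refine ⟨K + K', by positivity, ?_⟩
  intro θ θ' hθ hθ' M hM T hae ω hω t ht
  unfold dr
  rw [← intervalIntegral.integral_sub (gInt_ii P hF hΓ hW hU hθ ω 0 t)
    (gInt_ii P hF hΓ hW hU hθ' ω 0 t), ← Real.norm_eq_abs]
  refine intervalIntegral.norm_integral_le_of_norm_le ht.1 ?_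
    ((continuous_const.mul hM).intervalIntegrable _ _)
  refine Eventually.of_forall fun s hs => ?_
  have hsT : s ∈ Icc 0 T := ⟨hs.1.le, hs.2.trans ht.2⟩
  unfold gInt
  rw [add_sub_add_comm, ← integral_sub (inner_integrable P hΓ hW hU hθ _ _ _)
    (inner_integrable P hΓ hW hU hθ' _ _ _), add_mul]
  refine (norm_add_le _ _).trans (add_le_add ?_ ?_)
  · rw [← dist_eq_norm]
    exact (hK.dist_le_mul _ _).trans (mul_le_mul_of_nonneg_left (hω s hsT) K.2)
  · have := norm_integral_le_of_norm_le_const (μ := P) (C := K' * M s)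
      (f := fun ω' => W (U ω) (U ω') * Γ (θ ω s) (θ ω' s) - W (U ω) (U ω') * Γ (θ' ω s) (θ' ω' s))
      (by
        filter_upwards [hae] with ω' hω'
        rw [← mul_sub, norm_mul]
        have h := hW.2.1 (U ω) (U ω')
        rw [Real.norm_of_nonneg h.1]
        have h1 : ‖Γ (θ ω s) (θ ω' s) - Γ (θ' ω s) (θ' ω' s)‖ ≤ K' * M s := by
          rw [← dist_eq_norm]
          refine (hK'.dist_le_mul (θ ω s, θ ω' s) (θ' ω s, θ' ω' s)).trans
            (mul_le_mul_of_nonneg_left ?_ K'.2)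
          rw [Prod.dist_eq]
          exact max_le (hω s hsT) (hω' s hsT)
        calc _ ≤ 1 * ‖Γ (θ ω s) (θ ω' s) - Γ (θ' ω s) (θ' ω' s)‖ :=
              mul_le_mul_of_nonneg_right h.2 (norm_nonneg _)
          _ ≤ _ := by simpa using h1)
    simpa using this

/-- The bounds of the Picard iteration. -/
def bnd (L : ℝ) (n : ℕ) (s : ℝ) : ℝ := Real.pi * ((L * s) ^ n / n.factorial)

theorem bnd_cont (L : ℝ) (n : ℕ) : Continuous (bnd L n) := by
  unfold bnd; fun_prop

theorem bnd_int (L : ℝ) (n : ℕ) (t : ℝ) : ∫ s in (0:ℝ)..t, L * bnd L n s = bnd L (n+1) t := by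
  have h : ∀ s, L * bnd L n s = (Real.pi * L ^ (n+1) / n.factorial) * s ^ n := by
    intro s; unfold bnd; rw [mul_pow]; ring
  simp_rw [h]
  rw [intervalIntegral.integral_const_mul, integral_pow]
  unfold bnd
  rw [Nat.factorial_succ, mul_pow]
  have : (n.factorial : ℝ) ≠ 0 := by positivity
  push_cast
  have : (n + 1 : ℝ) ≠ 0 := by positivity
  field_simp
  simp

theorem torus_dist_le (a b : Torus) : dist a b ≤ Real.pi := by
  rw [dist_eq_norm]
  have := AddCircle.norm_le_half_period (2 * Real.pi) (x := a - b) (by positivity)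
  rwa [abs_of_pos (by positivity), mul_div_cancel_left₀ _ two_ne_zero] at this

theorem torus_dist_coe (a : Torus) (x y : ℝ) :
    dist (a + (x : Torus)) (a + (y : Torus)) ≤ |x - y| := by
  rw [dist_add_left, dist_eq_norm, ← AddCircle.coe_sub, ← Real.norm_eq_abs]
  exact QuotientAddGroup.norm_mk_le_norm

theorem bnd_summable (L t : ℝ) : Summable (fun n => bnd L n t) :=
  (Real.summable_pow_div_factorial (L * t)).mul_left _

/-- Clamp to `[0,T]`. -/
def clampT (T t : ℝ) : ℝ := max 0 (min T t)

theorem clampT_cont (T : ℝ) : Continuous (clampT T) := by unfold clampT; fun_prop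

theorem clampT_mem {T : ℝ} (hT : 0 < T) (t : ℝ) : clampT T t ∈ Icc 0 T :=
  ⟨le_max_left _ _, max_le hT.le (min_le_left _ _)⟩

theorem clampT_eq {T t : ℝ} (ht : t ∈ Icc 0 T) : clampT T t = t := by
  unfold clampT; rw [min_eq_right ht.2, max_eq_right ht.1]

/-- Picard map. -/
def pic (T : ℝ) (P : Measure Ω) (F : Torus → ℝ) (Γ : Torus → Torus → ℝ) (W : ℝ → ℝ → ℝ)
    (U : Ω → ℝ) (θ0 : Ω → Torus) (B : Ω → ℝ → ℝ) (θ : Ω → ℝ → Torus) (ω : Ω) (t : ℝ) : Torus :=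
  θ0 ω + ((dr P F Γ W U θ ω (clampT T t) + B ω (clampT T t) : ℝ) : Torus)

theorem pic_good {T : ℝ} (hT : 0 < T) (P : Measure Ω) [IsProbabilityMeasure P] {F : Torus → ℝ}
    {Γ : Torus → Torus → ℝ} {W : ℝ → ℝ → ℝ} {U : Ω → ℝ} {θ : Ω → ℝ → Torus}
    {θ0 : Ω → Torus} {B : Ω → ℝ → ℝ}
    (hF : BddLip F) (hΓ : BddLip2 Γ) (hW : IsGraphon W) (hU : Measurable U) (hθ : GoodProc θ)
    (hθ0 : Measurable θ0) (hB : IsStandardBM T P B) : GoodProc (pic T P F Γ W U θ0 B θ) where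
  meas s := by
    unfold pic
    refine hθ0.add ?_
    exact AddCircle.measurable_mk'.comp
      ((dr_meas P hF hΓ hW hU hθ _).add (hB.2.2.1 _))
  cont ω := by
    unfold pic
    refine continuous_const.add ?_
    refine (AddCircle.continuous_mk' _).comp
      (((dr_cont P hF hΓ hW hU hθ ω).comp (clampT_cont T)).add ?_)
    exact (hB.2.1 ω).comp_continuous (clampT_cont T) (clampT_mem hT)

theorem fixed_exists {T : ℝ} (hT : 0 < T) (P : Measure Ω) [IsProbabilityMeasure P] {F : Torus → ℝ}
    {Γ : Torus → Torus → ℝ} {W : ℝ → ℝ → ℝ} {U : Ω → ℝ}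
    {θ0 : Ω → Torus} {B : Ω → ℝ → ℝ}
    (hF : BddLip F) (hΓ : BddLip2 Γ) (hW : IsGraphon W) (hU : Measurable U)
    (hθ0 : Measurable θ0) (hB : IsStandardBM T P B) :
    ∃ θ, GoodProc θ ∧ ∀ ω t, θ ω t = pic T P F Γ W U θ0 B θ ω t := by
  obtain ⟨L, hL, hstep⟩ := step_est P hF hΓ hW hU
  set Φ := pic T P F Γ W U θ0 B with hΦ
  have hΦstep : ∀ (θ θ' : Ω → ℝ → Torus), GoodProc θ → GoodProc θ' →
      ∀ (M : ℝ → ℝ), Continuous M →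
      (∀ ω, ∀ s ∈ Icc 0 T, dist (θ ω s) (θ' ω s) ≤ M s) → ∀ ω t,
      dist (Φ θ ω t) (Φ θ' ω t) ≤ ∫ s in (0:ℝ)..(clampT T t), L * M s := by
    intro θ θ' hθ hθ' M hM h ω t
    refine (torus_dist_coe _ _ _).trans ?_
    rw [add_sub_add_right_eq_sub]
    exact hstep θ θ' hθ hθ' M hM T (Eventually.of_forall h) ω (h ω) _ (clampT_mem hT t)
  let x : ℕ → Ω → ℝ → Torus := fun n => Φ^[n] (fun _ _ => 0)
  have hxs : ∀ n, x (n+1) = Φ (x n) := fun n => Function.iterate_succ_apply' _ _ _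
  have hxg : ∀ n, GoodProc (x n) := by
    intro n
    induction n with
    | zero => exact ⟨fun _ => measurable_const, fun _ => continuous_const⟩
    | succ n ih => rw [hxs]; exact pic_good hT P hF hΓ hW hU ih hθ0 hB
  have hd : ∀ n ω t, dist (x n ω t) (x (n+1) ω t) ≤ bnd L n (clampT T t) := by
    intro n
    induction n with
    | zero => intro ω t; simpa [bnd] using torus_dist_le _ _
    | succ n ih =>
      intro ω t
      rw [hxs (n+1)]
      nth_rewrite 1 [hxs n]
      rw [← bnd_int]
      refine hΦstep _ _ (hxg _) (hxg _) _ (bnd_cont L n) ?_ ω t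
      intro ω s hs
      simpa [clampT_eq hs] using ih ω s
  have hd' : ∀ n ω t, dist (x n ω t) (x (n+1) ω t) ≤ bnd L n T := by
    intro n ω t
    refine (hd n ω t).trans ?_
    have := clampT_mem hT t
    unfold bnd
    have h0 := this.1
    have h1 := this.2
    gcongr
  have hlim : ∀ ω t, ∃ a, Tendsto (fun n => x n ω t) atTop (𝓝 a) := fun ω t =>
    cauchySeq_tendsto_of_complete
      (cauchySeq_of_dist_le_of_summable _ (fun n => hd' n ω t) (bnd_summable L T))
  choose θ hθ using hlim
  let ε : ℕ → ℝ := fun n => ∑' m, bnd L (n + m) T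
  have hε : Tendsto ε atTop (𝓝 0) := by
    have := tendsto_sum_nat_add (fun n => bnd L n T)
    simpa [ε, add_comm] using this
  have hb : ∀ n ω t, dist (x n ω t) (θ ω t) ≤ ε n := fun n ω t =>
    dist_le_tsum_of_dist_le_of_tendsto _ (fun n => hd' n ω t) (bnd_summable L T) (hθ ω t) n
  have hgood : GoodProc θ := by
    constructor
    · intro s
      exact measurable_of_tendsto_metrizable (fun n => (hxg n).meas s)
        (tendsto_pi_nhds.2 fun ω => hθ ω s)
    · intro ω
      refine TendstoUniformly.continuous (F := fun n => x n ω) (p := atTop) ?_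
        (Frequently.of_forall fun n => (hxg n).cont ω)
      rw [Metric.tendstoUniformly_iff]
      intro e he
      filter_upwards [hε.eventually (gt_mem_nhds he)] with n hn t
      rw [dist_comm]
      exact (hb n ω t).trans_lt hn
  refine ⟨θ, hgood, fun ω t => ?_⟩
  refine tendsto_nhds_unique ((tendsto_add_atTop_iff_nat 1).2 (hθ ω t)) ?_
  rw [tendsto_iff_dist_tendsto_zero]
  refine squeeze_zero (g := fun n => clampT T t * (L * ε n)) (fun _ => dist_nonneg) (fun n => ?_) ?_
  · rw [hxs]
    refine (hΦstep _ _ (hxg n) hgood (fun _ => ε n) continuous_const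
      (fun ω s _ => hb n ω s) ω t).trans (le_of_eq ?_)
    simp only [intervalIntegral.integral_const, sub_zero, smul_eq_mul]
  · simpa using (hε.const_mul L).const_mul (clampT T t)

/-- Kernel averaging equals averaging over `Ω`. -/
theorem ker_eq (P : Measure Ω) [IsProbabilityMeasure P]
    {Γ : Torus → Torus → ℝ} {W : ℝ → ℝ → ℝ} {U : Ω → ℝ} {θ : Ω → ℝ → Torus}
    (hΓ : BddLip2 Γ) (hW : IsGraphon W) (hU : Measurable U) (hθ : GoodProc θ) (s : ℝ)
    (κ : ℝ → Measure Torus) (hκ : Measurable κ) (hκp : ∀ y, IsProbabilityMeasure (κ y))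
    (hdis : ∀ S : Set ℝ, MeasurableSet S → ∀ A : Set Torus, MeasurableSet A →
      P {ω | U ω ∈ S ∧ θ ω s ∈ A} = ∫⁻ y in S ∩ I01, κ y A ∂volume) (x : ℝ) (a : Torus) :
    ∫ y in I01, W x y * ∫ u, Γ a u ∂(κ y) = ∫ ω', W x (U ω') * Γ a (θ ω' s) ∂P := by
  let k : Kernel ℝ Torus := ⟨κ, hκ⟩
  have : IsMarkovKernel k := ⟨hκp⟩
  have hUθ : Measurable (fun ω => (U ω, θ ω s)) := hU.prodMk (hθ.meas s)
  have hP : IsProbabilityMeasure (P.map (fun ω => (U ω, θ ω s))) :=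
    Measure.isProbabilityMeasure_map hUθ.aemeasurable
  have heq : P.map (fun ω => (U ω, θ ω s)) = (volume.restrict I01) ⊗ₘ k := by
    refine Measure.ext_prod fun {S A} hS hA => ?_
    rw [Measure.compProd_apply_prod hS hA, Measure.map_apply hUθ (hS.prod hA),
      Measure.restrict_restrict hS]
    exact hdis S hS A hA
  have hf : Measurable (fun p : ℝ × Torus => W x p.1 * Γ a p.2) :=
    (hW.1.comp (measurable_const.prodMk measurable_fst)).mul
      (hΓ.meas.comp (measurable_const.prodMk measurable_snd))
  obtain ⟨M, hM⟩ := hΓ.2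
  have h1 := integral_map (μ := P) hUθ.aemeasurable (f := fun p : ℝ × Torus => W x p.1 * Γ a p.2)
    hf.aestronglyMeasurable
  have hint : Integrable (fun p : ℝ × Torus => W x p.1 * Γ a p.2)
      ((volume.restrict I01) ⊗ₘ k) := by
    rw [← heq]
    exact Integrable.of_bound (C := M) hf.aestronglyMeasurable
      (Eventually.of_forall fun p => WΓ_bound hW hM _ _ _ _)
  rw [heq, Measure.integral_compProd hint] at h1
  rw [← h1]
  simp only [integral_const_mul]
  rfl

theorem drift_eq {T : ℝ} (P : Measure Ω) [IsProbabilityMeasure P] {F : Torus → ℝ}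
    {Γ : Torus → Torus → ℝ} {W : ℝ → ℝ → ℝ} {U : Ω → ℝ} {θ : Ω → ℝ → Torus}
    {μker : ℝ → ℝ → Measure Torus}
    (hF : BddLip F) (hΓ : BddLip2 Γ) (hW : IsGraphon W) (hU : Measurable U) (hθ : GoodProc θ)
    (hκ : ∀ s : ℝ, Measurable (fun y => μker y s))
    (hκp : ∀ y s, IsProbabilityMeasure (μker y s))
    (hdis : ∀ s ∈ Set.Icc (0:ℝ) T, ∀ S : Set ℝ, MeasurableSet S →
      ∀ A : Set Torus, MeasurableSet A →
        P {ω | U ω ∈ S ∧ θ ω s ∈ A} = ∫⁻ y in S ∩ I01, μker y s A ∂volume)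
    (ω : Ω) {t : ℝ} (ht : t ∈ Icc 0 T) :
    drift F Γ W μker (U ω) (θ ω) t = dr P F Γ W U θ ω t := by
  have hFc : Continuous F := by
    obtain ⟨⟨K, hK⟩, _⟩ := hF
    exact hK.continuous
  have h2 : ∫ s in Set.Icc 0 t, ∫ y in I01, W (U ω) y * ∫ u, Γ (θ ω s) u ∂(μker y s)
      = ∫ s in Set.Icc 0 t, ∫ ω', W (U ω) (U ω') * Γ (θ ω s) (θ ω' s) ∂P := by
    refine setIntegral_congr_fun measurableSet_Icc fun s hs => ?_
    exact ker_eq P hΓ hW hU hθ s _ (hκ s) (fun y => hκp y s)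
      (hdis s ⟨hs.1, hs.2.trans ht.2⟩) _ _
  have hFi : IntervalIntegrable (fun s => F (θ ω s)) volume 0 t :=
    (hFc.comp (hθ.cont ω)).intervalIntegrable _ _
  have hg := gInt_ii P hF hΓ hW hU hθ ω 0 t
  have hGi : IntervalIntegrable
      (fun s => ∫ ω', W (U ω) (U ω') * Γ (θ ω s) (θ ω' s) ∂P) volume 0 t := by
    refine (hg.sub hFi).congr ?_
    intro s _
    simp [gInt]
  unfold drift dr gInt
  rw [h2, intervalIntegral.integral_add hFi hGi, intervalIntegral.integral_of_le ht.1,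
    intervalIntegral.integral_of_le ht.1, integral_Icc_eq_integral_Ioc,
    integral_Icc_eq_integral_Ioc]

theorem sol_unique {T : ℝ} (P : Measure Ω) [IsProbabilityMeasure P] {F : Torus → ℝ}
    {Γ : Torus → Torus → ℝ} {W : ℝ → ℝ → ℝ} {U : Ω → ℝ} {θ θ' : Ω → ℝ → Torus}
    {θ0 : Ω → Torus} {B : Ω → ℝ → ℝ}
    (hF : BddLip F) (hΓ : BddLip2 Γ) (hW : IsGraphon W) (hU : Measurable U)
    (hθ : GoodProc θ) (hθ' : GoodProc θ')
    (h : ∀ᵐ ω ∂P, ∀ t ∈ Icc 0 T, θ ω t = θ0 ω + ((dr P F Γ W U θ ω t + B ω t : ℝ) : Torus))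
    (h' : ∀ᵐ ω ∂P, ∀ t ∈ Icc 0 T, θ' ω t = θ0 ω + ((dr P F Γ W U θ' ω t + B ω t : ℝ) : Torus)) :
    ∀ᵐ ω ∂P, ∀ t ∈ Icc 0 T, θ ω t = θ' ω t := by
  obtain ⟨L, hL, hstep⟩ := step_est P hF hΓ hW hU
  have hn : ∀ n, ∀ᵐ ω ∂P, ∀ t ∈ Icc 0 T, dist (θ ω t) (θ' ω t) ≤ bnd L n t := by
    intro n
    induction n with
    | zero => exact Eventually.of_forall fun ω t _ => by simpa [bnd] using torus_dist_le _ _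
    | succ n ih =>
      filter_upwards [h, h', ih] with ω hω hω' hi t ht
      rw [hω t ht, hω' t ht, ← bnd_int]
      refine (torus_dist_coe _ _ _).trans ?_
      rw [add_sub_add_right_eq_sub]
      exact hstep θ θ' hθ hθ' _ (bnd_cont L n) T ih ω hi t ht
  filter_upwards [ae_all_iff.2 hn] with ω hω t ht
  have h0 := ge_of_tendsto' (bnd_summable L t).tendsto_atTop_zero (fun n => hω n t ht)
  exact dist_le_zero.1 h0

theorem sol_clamp {T : ℝ} (hT : 0 < T) {P : Measure Ω} [IsProbabilityMeasure P] {F : Torus → ℝ}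
    {Γ : Torus → Torus → ℝ} {W : ℝ → ℝ → ℝ} {U : Ω → ℝ} {θ : Ω → ℝ → Torus}
    {θ0 : Ω → Torus} {B : Ω → ℝ → ℝ} {μker : ℝ → ℝ → Measure Torus}
    (hF : BddLip F) (hΓ : BddLip2 Γ) (hW : IsGraphon W) (hU : Measurable U)
    (h : IsMeanFieldSolution T P F Γ W U θ0 B θ μker) :
    GoodProc (fun ω t => θ ω (clampT T t)) ∧
    ∀ᵐ ω ∂P, ∀ t ∈ Icc 0 T, θ ω (clampT T t) =
      θ0 ω + ((dr P F Γ W U (fun ω t => θ ω (clampT T t)) ω t + B ω t : ℝ) : Torus) := by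
  have hg : GoodProc (fun ω t => θ ω (clampT T t)) :=
    ⟨fun s => h.meas _, fun ω => (h.cont ω).comp_continuous (clampT_cont T) (clampT_mem hT)⟩
  refine ⟨hg, ?_⟩
  filter_upwards [h.sde] with ω hω t ht
  rw [clampT_eq ht, hω t ht, ← drift_eq (T := T) (μker := μker) P hF hΓ hW hU hg h.kerMeas h.kerProb
    ?_ ω ht]
  · have e : drift F Γ W μker (U ω) (fun t => θ ω (clampT T t)) t
        = drift F Γ W μker (U ω) (θ ω) t := by
      unfold drift
      congr 1
      · refine setIntegral_congr_fun measurableSet_Icc fun s hs => ?_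
        simp only [clampT_eq (T := T) ⟨hs.1, hs.2.trans ht.2⟩]
      · refine setIntegral_congr_fun measurableSet_Icc fun s hs => ?_
        simp only [clampT_eq (T := T) ⟨hs.1, hs.2.trans ht.2⟩]
    rw [e]
  · intro s hs
    simp only [clampT_eq hs]
    exact h.disint s hs

end helpers

/-- Proposition 2.1, existence and pathwise uniqueness: for data
`(U, θ0, B)` as above there exists a solution of the nonlinear equation for the labeled
graphon `W`, and any two solutions with the same data are `P`-a.s. equal on `[0,T]`. -/
theorem mean_field_equation_existence_and_uniqueness
    {Ω : Type*} [MeasurableSpace Ω] (T : ℝ) (hT : 0 < T)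
    (P : Measure Ω) [IsProbabilityMeasure P]
    (F : Torus → ℝ) (Γ : Torus → Torus → ℝ) (hF : BddLip F) (hΓ : BddLip2 Γ)
    (W : ℝ → ℝ → ℝ) (hW : IsGraphon W)
    (μ0 : Measure Torus) (hμ0 : IsProbabilityMeasure μ0)
    (U : Ω → ℝ) (θ0 : Ω → Torus) (B : Ω → ℝ → ℝ)
    (hdata : MeanFieldData T P μ0 U θ0 B) :
    (∃ (θ : Ω → ℝ → Torus) (μker : ℝ → ℝ → Measure Torus),
        IsMeanFieldSolution T P F Γ W U θ0 B θ μker) ∧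
    (∀ (θ θ' : Ω → ℝ → Torus) (μker μker' : ℝ → ℝ → Measure Torus),
        IsMeanFieldSolution T P F Γ W U θ0 B θ μker →
        IsMeanFieldSolution T P F Γ W U θ0 B θ' μker' →
        ∀ᵐ ω ∂P, ∀ t ∈ Set.Icc (0:ℝ) T, θ ω t = θ' ω t) := by
  obtain ⟨hU, hUlaw, hθ0, -, hB, -, -⟩ := hdata
  constructor
  · obtain ⟨θ, hg, hfix⟩ := fixed_exists hT P hF hΓ hW hU hθ0 hB
    have hdis : ∀ s ∈ Set.Icc (0:ℝ) T, ∀ S : Set ℝ, MeasurableSet S →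
        ∀ A : Set Torus, MeasurableSet A → P {ω | U ω ∈ S ∧ θ ω s ∈ A} =
          ∫⁻ y in S ∩ I01, condDistrib (fun ω => θ ω s) U P y A ∂volume := by
      intro s _ S hS A hA
      have h := compProd_map_condDistrib (mβ := inferInstance) (μ := P) (X := U) (hg.meas s).aemeasurable
      have h2 := congrArg (fun m => m (S ×ˢ A)) h
      rw [Measure.compProd_apply_prod hS hA,
        Measure.map_apply (hU.prodMk (hg.meas s)) (hS.prod hA), hUlaw,
        Measure.restrict_restrict hS] at h2
      exact h2.symm
    refine ⟨θ, fun y s => condDistrib (fun ω => θ ω s) U P y, ?_⟩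
    refine ⟨hg.meas, fun ω => (hg.cont ω).continuousOn, fun s => Kernel.measurable _,
      fun y s => inferInstance, hdis, ?_⟩
    refine Eventually.of_forall fun ω t ht => ?_
    rw [drift_eq P hF hΓ hW hU hg (fun s => Kernel.measurable _) (fun y s => inferInstance)
      hdis ω ht, hfix ω t]
    unfold pic
    rw [clampT_eq ht]
  · intro θ θ' μ μ' h h'
    obtain ⟨g, e⟩ := sol_clamp hT hF hΓ hW hU h
    obtain ⟨g', e'⟩ := sol_clamp hT hF hΓ hW hU h'
    filter_upwards [sol_unique P hF hΓ hW hU g g' e e'] with ω hω t ht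
    simpa only [clampT_eq ht] using hω t ht
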